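/- Let n ≥ 2 be an integer, let ψ be a real with 0 < ψ < 1 and let ω be a real with ω > 0. Then K_{n,1}(ψ,ω) ≤ K_{n,0}(ψ,ω) (equivalently τ_1(ψ,ω) ≤ 1, equivalently π = ψ τ_1(ψ,ω) ≤ ψ) if and only if (2ψ − 1)(ω − 1) ≥ 0, i.e. if and only if either (ψ ≤ 1/2 and ω ≤ 1) or (ψ ≥ 1/2 and ω ≥ 1). -/

import Mathlib

open Filter Finset

/-- `K n a ψ ω = Σ_{i=0}^{n−a} C(n−a,i) ψ^i (1−ψ)^{n−a−i} ω^{(n−a−i)(i+a)}`. -/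
noncomputable def K (n a : ℕ) (ψ ω : ℝ) : ℝ :=
  ∑ i ∈ Finset.range (n - a + 1),
    (Nat.choose (n - a) i : ℝ) * ψ ^ i * (1 - ψ) ^ (n - a - i) * ω ^ ((n - a - i) * (i + a))

/-- `τ j = K n j / K n 0`. -/
noncomputable def τ (n j : ℕ) (ψ ω : ℝ) : ℝ := K n j ψ ω / K n 0 ψ ω

/-- pmf of the (L)MBD. -/
noncomputable def lmbd (n : ℕ) (ψ ω : ℝ) (y : ℕ) : ℝ :=
  (Nat.choose n y : ℝ) * ψ ^ y * (1 - ψ) ^ (n - y) * ω ^ ((n - y) * y) / K n 0 ψ ω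

/-- mean of the (L)MBD. -/
noncomputable def lmbdMean (n : ℕ) (ψ ω : ℝ) : ℝ :=
  ∑ y ∈ Finset.range (n + 1), (y : ℝ) * lmbd n ψ ω y

/-- variance of the (L)MBD. -/
noncomputable def lmbdVar (n : ℕ) (ψ ω : ℝ) : ℝ :=
  ∑ y ∈ Finset.range (n + 1), ((y : ℝ) - lmbdMean n ψ ω) ^ 2 * lmbd n ψ ω y

/-!
Write `q = 1 - ψ`. Pascal's rule turns `K n 0 - K n 1` into `q` times the sum over `j + k = n - 1`
of the symmetric positive weights `C(n-1, j) ω ^ (j * k)` times `(ω ^ j - ω ^ k) ψ ^ j q ^ k`.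
Averaging each term with its image under `j ↔ k` replaces `ψ ^ j q ^ k` by half of
`ψ ^ j q ^ k - ψ ^ k q ^ j`, and then every term with `j ≠ k` has the sign of `(ω - 1) (ψ - q)`.
Such a term exists because `n - 1 ≠ 0`.
-/

section SignSymmetrization

open SignType (sign)

variable {R : Type*} [CommRing R]

lemma two_mul_sum_antidiagonal_mul_sub_swap {m : ℕ} {w : ℕ → ℕ → R}
    (hw : ∀ j k, j + k = m → w k j = w j k) (f g : ℕ → ℕ → R) :
    2 * ∑ p ∈ antidiagonal m, w p.1 p.2 * (f p.1 p.2 - f p.2 p.1) * g p.1 p.2 =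
      ∑ p ∈ antidiagonal m,
        w p.1 p.2 * ((f p.1 p.2 - f p.2 p.1) * (g p.1 p.2 - g p.2 p.1)) := by
  calc 2 * ∑ p ∈ antidiagonal m, w p.1 p.2 * (f p.1 p.2 - f p.2 p.1) * g p.1 p.2
      = ∑ p ∈ antidiagonal m, (w p.1 p.2 * (f p.1 p.2 - f p.2 p.1) * g p.1 p.2 +
          w p.2 p.1 * (f p.2 p.1 - f p.1 p.2) * g p.2 p.1) := by
        rw [sum_add_distrib, two_mul]
        exact congrArg _ (Nat.sum_antidiagonal_swap
          (f := fun p => w p.1 p.2 * (f p.1 p.2 - f p.2 p.1) * g p.1 p.2)).symm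
    _ = ∑ p ∈ antidiagonal m,
          w p.1 p.2 * ((f p.1 p.2 - f p.2 p.1) * (g p.1 p.2 - g p.2 p.1)) :=
        sum_congr rfl fun p hp => by rw [hw _ _ (mem_antidiagonal.mp hp)]; ring

variable [LinearOrder R] [IsStrictOrderedRing R] {a b x y : R}

lemma sign_pow_sub_pow {n : ℕ} (hn : n ≠ 0) (hx : 0 < x) (hy : 0 < y) :
    sign (x ^ n - y ^ n) = sign (x - y) := by
  have geom_pos : 0 < ∑ i ∈ range n, x ^ i * y ^ (n - 1 - i) :=
    sum_pos (fun i _ => by positivity) (nonempty_range_iff.mpr hn)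
  rw [← geom_sum₂_mul, sign_mul, sign_pos geom_pos, one_mul]

lemma sign_pow_mul_pow_sub_pow_mul_pow {j k : ℕ} (hkj : k < j) (hx : 0 < x) (hy : 0 < y) :
    sign (x ^ j * y ^ k - x ^ k * y ^ j) = sign (x - y) := by
  have factor : x ^ j * y ^ k - x ^ k * y ^ j = (x * y) ^ k * (x ^ (j - k) - y ^ (j - k)) := by
    obtain ⟨d, rfl⟩ := Nat.exists_eq_add_of_le hkj.le
    rw [Nat.add_sub_cancel_left]
    ring
  rw [factor, sign_mul, sign_pos (by positivity), one_mul,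
    sign_pow_sub_pow (Nat.sub_ne_zero_of_lt hkj) hx hy]

lemma sign_mul_pow_mul_pow_sub_pow_mul_pow {j k : ℕ} (hjk : j ≠ k)
    (ha : 0 < a) (hb : 0 < b) (hx : 0 < x) (hy : 0 < y) :
    sign ((a ^ j * b ^ k - a ^ k * b ^ j) * (x ^ j * y ^ k - x ^ k * y ^ j)) =
      sign ((a - b) * (x - y)) := by
  wlog hkj : k < j generalizing j k
  · rw [← this hjk.symm (hjk.lt_of_le (not_lt.mp hkj)), ← neg_mul_neg, neg_sub, neg_sub]
  · rw [sign_mul, sign_mul, sign_pow_mul_pow_sub_pow_mul_pow hkj ha hb,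
      sign_pow_mul_pow_sub_pow_mul_pow hkj hx hy]

lemma sign_sum_antidiagonal_mul_pow_sub_swap {m : ℕ} (hm : m ≠ 0) {w : ℕ → ℕ → R}
    (hw_symm : ∀ j k, j + k = m → w k j = w j k) (hw_pos : ∀ j k, j + k = m → 0 < w j k)
    (ha : 0 < a) (hb : 0 < b) (hx : 0 < x) (hy : 0 < y) :
    sign (∑ p ∈ antidiagonal m,
        w p.1 p.2 * (a ^ p.1 * b ^ p.2 - a ^ p.2 * b ^ p.1) * (x ^ p.1 * y ^ p.2)) =
      sign ((a - b) * (x - y)) := by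
  let term : ℕ × ℕ → R := fun p => w p.1 p.2 *
    ((a ^ p.1 * b ^ p.2 - a ^ p.2 * b ^ p.1) * (x ^ p.1 * y ^ p.2 - x ^ p.2 * y ^ p.1))
  have sign_term : ∀ p ∈ {p ∈ antidiagonal m | p.1 ≠ p.2},
      sign (term p) = sign ((a - b) * (x - y)) := fun p hp => by
    obtain ⟨hpm, hne⟩ := mem_filter.mp hp
    rw [sign_mul, sign_pos (hw_pos _ _ (mem_antidiagonal.mp hpm)), one_mul,
      sign_mul_pow_mul_pow_sub_pow_mul_pow hne ha hb hx hy]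
  have sum_off_diagonal : ∑ p ∈ antidiagonal m with p.1 ≠ p.2, term p =
      ∑ p ∈ antidiagonal m, term p :=
    sum_filter_of_ne fun p _ hp hdiag => hp (by simp only [term, hdiag, sub_self, mul_zero])
  have off_diagonal_nonempty : {p ∈ antidiagonal m | p.1 ≠ p.2}.Nonempty :=
    ⟨(m, 0), by simpa using hm⟩
  rw [← sign_sum off_diagonal_nonempty _ sign_term, sum_off_diagonal,
    ← two_mul_sum_antidiagonal_mul_sub_swap hw_symm (fun j k => a ^ j * b ^ k)
      (fun j k => x ^ j * y ^ k), sign_mul, sign_pos two_pos, one_mul]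

end SignSymmetrization

section NormalizingConstants

variable {ψ ω : ℝ}

lemma K_eq_sum_antidiagonal (m a : ℕ) (ψ ω : ℝ) :
    K (m + a) a ψ ω = ∑ p ∈ antidiagonal m,
      (m.choose p.1 : ℝ) * (ψ ^ p.1 * (1 - ψ) ^ p.2 * ω ^ (p.2 * (p.1 + a))) := by
  simp only [K, Nat.add_sub_cancel, Nat.sum_antidiagonal_eq_sum_range_succ_mk, mul_assoc]

lemma K_pos (n a : ℕ) (hψ0 : 0 < ψ) (hψ1 : ψ < 1) (hω : 0 < ω) : 0 < K n a ψ ω := by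
  have : 0 < 1 - ψ := sub_pos.mpr hψ1
  refine sum_pos (fun i hi => ?_) nonempty_range_add_one
  have : 0 < (n - a).choose i := Nat.choose_pos (mem_range_succ_iff.mp hi)
  positivity

lemma K_zero_sub_K_one (m : ℕ) (ψ ω : ℝ) :
    K (m + 1) 0 ψ ω - K (m + 1) 1 ψ ω = (1 - ψ) * ∑ p ∈ antidiagonal m,
      (m.choose p.1 : ℝ) * ω ^ (p.1 * p.2) * (ω ^ p.1 - ω ^ p.2) *
        (ψ ^ p.1 * (1 - ψ) ^ p.2) := by
  have pascal := sum_antidiagonal_choose_succ_mul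
    (fun i j => ψ ^ i * (1 - ψ) ^ j * ω ^ (j * (i + 0))) m
  rw [← K_eq_sum_antidiagonal (m + 1) 0] at pascal
  rw [← add_zero (m + 1), pascal, add_zero, K_eq_sum_antidiagonal, ← sum_add_distrib,
    ← sum_sub_distrib, mul_sum]
  refine sum_congr rfl fun p hp => ?_
  rw [Nat.choose_symm_of_eq_add (mem_antidiagonal.mp hp).symm]
  ring

lemma sign_K_zero_sub_K_one {n : ℕ} (hn : 2 ≤ n) (hψ0 : 0 < ψ) (hψ1 : ψ < 1) (hω : 0 < ω) :
    SignType.sign (K n 0 ψ ω - K n 1 ψ ω) = SignType.sign ((2 * ψ - 1) * (ω - 1)) := by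
  obtain ⟨m, rfl⟩ : ∃ m, n = m + 1 := Nat.exists_eq_add_of_le' (by lia)
  have hψ' : 0 < 1 - ψ := sub_pos.mpr hψ1
  have weight_symm : ∀ j k, j + k = m →
      (m.choose k : ℝ) * ω ^ (k * j) = m.choose j * ω ^ (j * k) := fun j k hjk => by
    rw [Nat.choose_symm_of_eq_add hjk.symm, mul_comm k]
  have weight_pos : ∀ j k, j + k = m → 0 < (m.choose j : ℝ) * ω ^ (j * k) := fun j k hjk =>
    mul_pos (mod_cast Nat.choose_pos (by lia)) (pow_pos hω _)
  have sign_sum_eq := sign_sum_antidiagonal_mul_pow_sub_swap (by lia) weight_symm weight_pos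
    hω one_pos hψ0 hψ'
  simp only [one_pow, mul_one] at sign_sum_eq
  rw [K_zero_sub_K_one, sign_mul, sign_pos hψ', one_mul, sign_sum_eq]
  congr 1
  ring

end NormalizingConstants

theorem stmt_17 (n : ℕ) (hn : 2 ≤ n) (ψ : ℝ) (hψ0 : 0 < ψ) (hψ1 : ψ < 1)
    (ω : ℝ) (hω : 0 < ω) :
    (K n 1 ψ ω ≤ K n 0 ψ ω ↔ (2 * ψ - 1) * (ω - 1) ≥ 0) ∧
    (τ n 1 ψ ω ≤ 1 ↔ (2 * ψ - 1) * (ω - 1) ≥ 0) ∧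
    (ψ * τ n 1 ψ ω ≤ ψ ↔ (2 * ψ - 1) * (ω - 1) ≥ 0) ∧
    ((2 * ψ - 1) * (ω - 1) ≥ 0 ↔ (ψ ≤ 1 / 2 ∧ ω ≤ 1) ∨ (1 / 2 ≤ ψ ∧ 1 ≤ ω)) := by
  have K_le_iff : K n 1 ψ ω ≤ K n 0 ψ ω ↔ (2 * ψ - 1) * (ω - 1) ≥ 0 := by
    rw [← sub_nonneg, ← sign_nonneg_iff, sign_K_zero_sub_K_one hn hψ0 hψ1 hω, sign_nonneg_iff]
  have τ_le_iff : τ n 1 ψ ω ≤ 1 ↔ (2 * ψ - 1) * (ω - 1) ≥ 0 := by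
    rw [τ, div_le_one (K_pos n 0 hψ0 hψ1 hω), K_le_iff]
  refine ⟨K_le_iff, τ_le_iff, by rw [mul_le_iff_le_one_right hψ0, τ_le_iff], ?_⟩
  rw [ge_iff_le, mul_nonneg_iff, or_comm]
  refine or_congr (and_congr ?_ ?_) (and_congr ?_ ?_) <;> constructor <;> intro h <;> linarith
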